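/- arXiv:2407.04371 — 3 statements merged into one kernel-verified Lean document; each statement's English description precedes it below -/
import Mathlib

section
/- Let N ≥ 1 and let U ∈ M_{2N}(ℂ) be unitary. Then there exists a real weight matrix w ∈ ℝ^{N×N} such that for every x ∈ ℂ^N, the QNN output satisfies f_U(x) = ∑_{i,j} w_{ij} (x⊛x)_{ij}. That is, every function expressible by a QNN is expressible by a tensor product perceptron acting on x⊛x. -/
open Matrix

/-- The complex tensor product `x ⊛ x ∈ ℝ^{N×N}`:
`(x⊛x)_{ii} = |x_i|²` and, for `i ≠ j`, `(x⊛x)_{ij} = Re(x_i conj(x_j)) + Im(x_i conj(x_j))`. -/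
def cprod {N : ℕ} (x : Fin N → ℂ) : Fin N → Fin N → ℝ := fun i j =>
  if i = j then Complex.normSq (x i)
  else (x i * star (x j)).re + (x i * star (x j)).im

/-! For a Hermitian matrix `A`, `Re A` is symmetric and `Im A` is antisymmetric. Symmetric and
antisymmetric real matrices are orthogonal, so `A ↦ Re A + Im A` carries the trace form `tr (A B)`
on Hermitian matrices to the Frobenius inner product. As `x ⊛ x` is the image of the rank-one matrix
`x x†`, the form `x† H x = tr (H x x†)` is linear in `x ⊛ x`, with weights `Re H + Im H`. The output
of a QNN is the form of the upper left block of `U† Z U`. -/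

lemma trace_mul_eq_zero_of_isSymm_of_transpose_eq_neg {n R : Type*} [Fintype n]
    [NonUnitalCommRing R] [IsAddTorsionFree R] {S K : Matrix n n R} (hS : S.IsSymm)
    (hK : Kᵀ = -K) : (S * K).trace = 0 := by
  refine self_eq_neg.mp ?_
  calc (S * K).trace = (Kᵀ * Sᵀ).trace := by rw [← transpose_mul, trace_transpose]
    _ = -(S * K).trace := by rw [hK, hS.eq, neg_mul, trace_neg, trace_mul_comm]

section ReAddIm

variable {m n : Type*}

/-- The real matrix `Re A + Im A`, the encoding of a Hermitian matrix by as many real entries. -/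
def reAddIm (A : Matrix m n ℂ) : Matrix m n ℝ :=
  A.map Complex.re + A.map Complex.im

lemma isSymm_map_re_of_isHermitian {A : Matrix n n ℂ} (hA : A.IsHermitian) :
    (A.map Complex.re).IsSymm := by
  ext i j
  simp [← hA.apply i j]

lemma transpose_map_im_of_isHermitian {A : Matrix n n ℂ} (hA : A.IsHermitian) :
    (A.map Complex.im)ᵀ = -A.map Complex.im := by
  ext i j
  simp [← hA.apply i j]

variable [Fintype n]

lemma re_trace_mul [Fintype m] (A : Matrix m n ℂ) (B : Matrix n m ℂ) :
    (A * B).trace.re = (A.map Complex.re * B.map Complex.re).trace -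
      (A.map Complex.im * B.map Complex.im).trace := by
  simp [trace, mul_apply, Finset.sum_sub_distrib]

lemma ofReal_re_trace_mul_of_isHermitian {A B : Matrix n n ℂ} (hA : A.IsHermitian)
    (hB : B.IsHermitian) : ((A * B).trace.re : ℂ) = (A * B).trace := by
  refine Complex.conj_eq_iff_re.mp ?_
  rw [starRingEnd_apply, ← trace_conjTranspose, conjTranspose_mul, hA.eq, hB.eq, trace_mul_comm]

lemma trace_reAddIm_mul_transpose_reAddIm {A B : Matrix n n ℂ} (hA : A.IsHermitian)
    (hB : B.IsHermitian) : ((reAddIm A * (reAddIm B)ᵀ).trace : ℂ) = (A * B).trace := by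
  have re_im : (A.map Complex.re * B.map Complex.im).trace = 0 :=
    trace_mul_eq_zero_of_isSymm_of_transpose_eq_neg (isSymm_map_re_of_isHermitian hA)
      (transpose_map_im_of_isHermitian hB)
  have im_re : (A.map Complex.im * B.map Complex.re).trace = 0 := by
    rw [trace_mul_comm]
    exact trace_mul_eq_zero_of_isSymm_of_transpose_eq_neg (isSymm_map_re_of_isHermitian hB)
      (transpose_map_im_of_isHermitian hA)
  rw [← ofReal_re_trace_mul_of_isHermitian hA hB, re_trace_mul, reAddIm, reAddIm, transpose_add,
    (isSymm_map_re_of_isHermitian hB).eq, transpose_map_im_of_isHermitian hB]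
  simp only [add_mul, mul_add, mul_neg, trace_add, trace_neg, re_im, im_re]
  congr 1
  ring

end ReAddIm

section QuadraticForm

variable {m n p R : Type*} [Fintype n]

lemma dotProduct_mulVec_eq_trace_mul_vecMulVec [Fintype m] [NonUnitalCommSemiring R]
    (A : Matrix m n R) (y : m → R) (x : n → R) :
    y ⬝ᵥ (A *ᵥ x) = (A * vecMulVec x y).trace := by
  rw [mul_vecMulVec, trace_vecMulVec, dotProduct_comm]

lemma star_sumElim_zero_dotProduct_mulVec [Fintype p] [NonUnitalNonAssocSemiring R]
    [StarAddMonoid R] (H : Matrix (n ⊕ p) (n ⊕ p) R) (x : n → R) :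
    star (Sum.elim x 0) ⬝ᵥ (H *ᵥ Sum.elim x 0) = star x ⬝ᵥ (H.toBlocks₁₁ *ᵥ x) := by
  simp [dotProduct, mulVec, toBlocks₁₁]

end QuadraticForm

section TensorProduct

variable {N : ℕ}

lemma cprod_eq_reAddIm_vecMulVec (x : Fin N → ℂ) : cprod x = reAddIm (vecMulVec x (star x)) := by
  ext i j
  obtain rfl | hij := eq_or_ne i j
  · simp [cprod, reAddIm, vecMulVec_apply, Complex.normSq_apply, mul_comm]
  · simp [cprod, reAddIm, vecMulVec_apply, hij]

theorem star_dotProduct_mulVec_eq_sum_reAddIm_mul_cprod {H : Matrix (Fin N) (Fin N) ℂ}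
    (hH : H.IsHermitian) (x : Fin N → ℂ) :
    star x ⬝ᵥ (H *ᵥ x) = ((∑ i, ∑ j, reAddIm H i j * cprod x i j : ℝ) : ℂ) := by
  have hx : (vecMulVec x (star x)).IsHermitian := by
    rw [IsHermitian, conjTranspose_vecMulVec, star_star]
  rw [dotProduct_mulVec_eq_trace_mul_vecMulVec, ← trace_reAddIm_mul_transpose_reAddIm hH hx,
    ← sum_hadamard_eq, cprod_eq_reAddIm_vecMulVec]
  simp only [hadamard_apply]

theorem stmt2_general {p : Type*} [Fintype p] {H : Matrix (Fin N ⊕ p) (Fin N ⊕ p) ℂ}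
    (hH : H.IsHermitian) :
    ∃ w : Fin N → Fin N → ℝ,
      ∀ x : Fin N → ℂ,
        star (Sum.elim x 0) ⬝ᵥ (H *ᵥ Sum.elim x 0)
        = ((∑ i, ∑ j, w i j * cprod x i j : ℝ) : ℂ) :=
  ⟨reAddIm H.toBlocks₁₁, fun x => (star_sumElim_zero_dotProduct_mulVec H x).trans
    (star_dotProduct_mulVec_eq_sum_reAddIm_mul_cprod (hH.submatrix Sum.inl) x)⟩

end TensorProduct

/-- For every unitary `U ∈ M_{2N}(ℂ)` there is a real weight matrix
`w ∈ ℝ^{N×N}` such that the QNN output `f_U(x) = v† U† Z U v` equals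
`∑_{i,j} w_{ij} (x⊛x)_{ij}` for every `x ∈ ℂ^N`: every QNN function is expressible
by a tensor product perceptron acting on `x ⊛ x`. -/
theorem stmt2 (N : ℕ) (hN : 1 ≤ N)
    (U : Matrix (Fin N ⊕ Fin N) (Fin N ⊕ Fin N) ℂ)
    (hU : U ∈ Matrix.unitaryGroup (Fin N ⊕ Fin N) ℂ) :
    ∃ w : Fin N → Fin N → ℝ,
      ∀ x : Fin N → ℂ,
        star (Sum.elim x 0) ⬝ᵥ
          ((Uᴴ * Matrix.fromBlocks 1 0 0 (-1) * U) *ᵥ Sum.elim x 0)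
        = ((∑ i, ∑ j, w i j * cprod x i j : ℝ) : ℂ) :=
  stmt2_general <| isHermitian_conjTranspose_mul_mul U <|
    isHermitian_one.fromBlocks conjTranspose_zero isHermitian_one.neg
end

section
/- Let N ≥ 1 and let w ∈ ℝ^{N×N} be arbitrary real weights. Then there exist a unitary matrix U ∈ M_{2N}(ℂ) and a real constant c > 0 such that for every x ∈ ℂ^N, ∑_{i,j} w_{ij} (x⊛x)_{ij} = c · f_U(x). In particular, for classification (where only the sign of the output matters), a QNN can express any function a tensor product perceptron can. -/
open Matrix

/-!
The form `x ↦ ∑ w_{ij} (x⊛x)_{ij}` is `x ↦ x† H x` for a Hermitian `H`, and `A = r⁻¹ H` is a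
contraction for large `r`. Then `A = cos θ` for the self-adjoint `θ = arccos A`, and the rotation
`U` by the half angle, with blocks `cos (θ/2)` and `± sin (θ/2)`, is unitary; the first block of
`U† Z U` is `cos² (θ/2) - sin² (θ/2) = cos θ = A`.
-/

open scoped ComplexStarModule

section ContinuousFunctionalCalculus

variable {A : Type*} [Ring A] [StarRing A] [TopologicalSpace A] [Algebra ℝ A]
  [ContinuousFunctionalCalculus ℝ A IsSelfAdjoint]

lemma exists_pos_spectrum_inv_smul_subset_Icc (a : A) :
    ∃ r : ℝ, 0 < r ∧ spectrum ℝ (r⁻¹ • a) ⊆ Set.Icc (-1) 1 := by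
  have hcompact : IsCompact (spectrum ℝ a) :=
    ContinuousFunctionalCalculus.isCompact_spectrum (p := IsSelfAdjoint) a
  obtain ⟨r, hr, hbound⟩ := hcompact.isBounded.exists_pos_norm_le
  refine ⟨r, hr, fun t ht ↦ abs_le.mp ?_⟩
  have hmem : r * t ∈ spectrum ℝ a := by
    have := spectrum.smul_mem_smul_iff (r := Units.mk0 r hr.ne').mpr ht
    rwa [Units.smul_mk0, Units.smul_mk0, smul_inv_smul₀ hr.ne'] at this
  have hle : r * |t| ≤ r := by
    simpa only [Real.norm_eq_abs, abs_mul, abs_of_pos hr] using hbound _ hmem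
  exact (mul_le_iff_le_one_right hr).mp hle

lemma exists_sq_add_sq_eq_one_and_sq_sub_sq_eq {a : A} (ha : IsSelfAdjoint a)
    (hspec : spectrum ℝ a ⊆ Set.Icc (-1) 1) :
    ∃ c s : A, IsSelfAdjoint c ∧ IsSelfAdjoint s ∧ Commute c s ∧
      c ^ 2 + s ^ 2 = 1 ∧ c ^ 2 - s ^ 2 = a := by
  let c (t : ℝ) : ℝ := Real.cos (Real.arccos t / 2)
  let s (t : ℝ) : ℝ := Real.sin (Real.arccos t / 2)
  refine ⟨cfc c a, cfc s a, cfc_predicate c a, cfc_predicate s a, cfc_commute_cfc c s a, ?_, ?_⟩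
  · calc cfc c a ^ 2 + cfc s a ^ 2 = cfc (fun t ↦ c t ^ 2 + s t ^ 2) a := by
          rw [cfc_add .., cfc_pow .., cfc_pow ..]
      _ = cfc (fun _ : ℝ ↦ 1) a := by simp only [c, s, Real.cos_sq_add_sin_sq]
      _ = 1 := cfc_const_one ℝ a
  · have hcos : (spectrum ℝ a).EqOn (fun t ↦ c t ^ 2 - s t ^ 2) id := fun t ht ↦ by
      simp only [c, s, id, ← Real.cos_two_mul', mul_div_cancel₀ _ (two_ne_zero' ℝ),
        Real.cos_arccos (hspec ht).1 (hspec ht).2]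
    calc cfc c a ^ 2 - cfc s a ^ 2 = cfc (fun t ↦ c t ^ 2 - s t ^ 2) a := by
          rw [cfc_sub .., cfc_pow .., cfc_pow ..]
      _ = cfc id a := cfc_congr hcos
      _ = a := cfc_id ℝ a

end ContinuousFunctionalCalculus

section BlockMatrix

variable {n R : Type*} [Fintype n]

lemma fromBlocks_rotation_mem_unitaryGroup [DecidableEq n] [CommRing R] [StarRing R]
    {C S : Matrix n n R} (hC : C.IsHermitian) (hS : S.IsHermitian) (hcomm : Commute C S)
    (hone : C ^ 2 + S ^ 2 = 1) :
    fromBlocks C (-S) S C ∈ unitaryGroup (n ⊕ n) R := by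
  rw [mem_unitaryGroup_iff, star_eq_conjTranspose, fromBlocks_conjTranspose, fromBlocks_multiply,
    conjTranspose_neg, hC.eq, hS.eq, ← fromBlocks_one]
  congr 1
  · rw [neg_mul_neg, ← sq, ← sq, hone]
  · rw [neg_mul, hcomm.eq, add_neg_cancel]
  · rw [mul_neg, hcomm.eq, add_neg_cancel]
  · rw [← sq, ← sq, add_comm, hone]

lemma toBlocks₁₁_conj_fromBlocks_rotation [DecidableEq n] [Ring R] [StarRing R]
    {C S : Matrix n n R} (hC : C.IsHermitian) (hS : S.IsHermitian) :
    ((fromBlocks C (-S) S C)ᴴ * fromBlocks 1 0 0 (-1) * fromBlocks C (-S) S C).toBlocks₁₁ =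
      C ^ 2 - S ^ 2 := by
  rw [fromBlocks_conjTranspose, fromBlocks_multiply, fromBlocks_multiply, toBlocks_fromBlocks₁₁,
    hC.eq, hS.eq]
  noncomm_ring

lemma star_sumElim_zero_dotProduct_mulVec_s3 {m : Type*} [Fintype m] [NonUnitalSemiring R]
    [StarRing R] (M : Matrix (n ⊕ m) (n ⊕ m) R) (x : n → R) :
    star (Sum.elim x 0) ⬝ᵥ (M *ᵥ Sum.elim x 0) = star x ⬝ᵥ (M.toBlocks₁₁ *ᵥ x) := by
  rw [← fromBlocks_toBlocks M, fromBlocks_mulVec, Function.star_sumElim,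
    sumElim_dotProduct_sumElim]
  simp

theorem exists_mem_unitaryGroup_smul_toBlocks₁₁_eq [DecidableEq n] {H : Matrix n n ℂ}
    (hH : H.IsHermitian) :
    ∃ U ∈ unitaryGroup (n ⊕ n) ℂ, ∃ r : ℝ, 0 < r ∧
      r • (Uᴴ * fromBlocks 1 0 0 (-1) * U).toBlocks₁₁ = H := by
  obtain ⟨r, hr, hspec⟩ := exists_pos_spectrum_inv_smul_subset_Icc H
  have hsa : IsSelfAdjoint (r⁻¹ • H) := (IsSelfAdjoint.all _).smul hH.isSelfAdjoint
  obtain ⟨C, S, hC, hS, hcomm, hone, hdiff⟩ :=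
    exists_sq_add_sq_eq_one_and_sq_sub_sq_eq hsa hspec
  refine ⟨_, fromBlocks_rotation_mem_unitaryGroup hC hS hcomm hone, r, hr, ?_⟩
  rw [toBlocks₁₁_conj_fromBlocks_rotation hC hS, hdiff, smul_inv_smul₀ hr.ne']

end BlockMatrix

lemma star_dotProduct_realPart_mulVec {n : Type*} [Fintype n] (B : Matrix n n ℂ) (x : n → ℂ) :
    star x ⬝ᵥ ((ℜ B : Matrix n n ℂ) *ᵥ x) = ((star x ⬝ᵥ (B *ᵥ x)).re : ℂ) := by
  have hadj : star x ⬝ᵥ (Bᴴ *ᵥ x) = star (star x ⬝ᵥ (B *ᵥ x)) := by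
    rw [← star_dotProduct_star, star_star, star_mulVec, dotProduct_mulVec]
  rw [realPart_apply_coe, smul_mulVec, add_mulVec, dotProduct_smul, dotProduct_add,
    star_eq_conjTranspose, hadj, Complex.re_eq_add_conj, Complex.real_smul, Complex.star_def]
  push_cast
  ring

/-- The complex matrix `B` of a tensor product perceptron with weights `w`, normalized so that the
output on `x` is `Re (x† B x)`. Its `(j, i)` entry carries the weight `w i j`, and the factor
`1 - I` is there because `Re z + Im z = Re ((1 - I) z)`. -/
def weightMatrix {N : ℕ} (w : Fin N → Fin N → ℝ) : Matrix (Fin N) (Fin N) ℂ :=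
  of fun j i ↦ if i = j then (w i j : ℂ) else w i j * (1 - Complex.I)

lemma re_star_mul_weightMatrix_mul {N : ℕ} (w : Fin N → Fin N → ℝ) (x : Fin N → ℂ)
    (i j : Fin N) :
    (star (x j) * (weightMatrix w j i * x i)).re = w i j * cprod x i j := by
  rw [weightMatrix, of_apply, cprod]
  split_ifs with hij
  · subst hij
    rw [mul_left_comm, Complex.re_ofReal_mul, Complex.star_def, ← Complex.normSq_eq_conj_mul_self,
      Complex.ofReal_re]
  · have re_add_im (z : ℂ) : ((1 - Complex.I) * z).re = z.re + z.im := by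
      simp [Complex.mul_re]
    calc (star (x j) * (w i j * (1 - Complex.I) * x i)).re
        = (w i j * ((1 - Complex.I) * (x i * star (x j)))).re := by ring_nf
      _ = w i j * ((x i * star (x j)).re + (x i * star (x j)).im) := by
        rw [Complex.re_ofReal_mul, re_add_im]

lemma re_star_dotProduct_weightMatrix_mulVec {N : ℕ} (w : Fin N → Fin N → ℝ) (x : Fin N → ℂ) :
    (star x ⬝ᵥ (weightMatrix w *ᵥ x)).re = ∑ i, ∑ j, w i j * cprod x i j := by
  simp only [dotProduct, mulVec, Finset.mul_sum, Complex.re_sum, Pi.star_apply,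
    re_star_mul_weightMatrix_mul]
  exact Finset.sum_comm

/-- For any real weights `w ∈ ℝ^{N×N}` there exist a unitary
`U ∈ M_{2N}(ℂ)` and a constant `c > 0` such that for every `x ∈ ℂ^N`,
`∑_{i,j} w_{ij} (x⊛x)_{ij} = c · f_U(x)`, where `f_U(x) = v† U† Z U v`
with `v = (x,0)` and `Z = diag(I,-I)`. -/
theorem stmt3 (N : ℕ) (hN : 1 ≤ N) (w : Fin N → Fin N → ℝ) :
    ∃ U : Matrix (Fin N ⊕ Fin N) (Fin N ⊕ Fin N) ℂ,
      U ∈ Matrix.unitaryGroup (Fin N ⊕ Fin N) ℂ ∧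
      ∃ c : ℝ, 0 < c ∧
        ∀ x : Fin N → ℂ,
          ((∑ i, ∑ j, w i j * cprod x i j : ℝ) : ℂ)
            = (c : ℂ) *
              (star (Sum.elim x 0) ⬝ᵥ
                ((Uᴴ * Matrix.fromBlocks 1 0 0 (-1) * U) *ᵥ Sum.elim x 0)) := by
  obtain ⟨U, hU, r, hr, hUH⟩ :=
    exists_mem_unitaryGroup_smul_toBlocks₁₁_eq (ℜ (weightMatrix w)).prop
  refine ⟨U, hU, r, hr, fun x ↦ ?_⟩
  rw [← re_star_dotProduct_weightMatrix_mulVec, ← star_dotProduct_realPart_mulVec, ← hUH,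
    smul_mulVec, dotProduct_smul, Complex.real_smul, star_sumElim_zero_dotProduct_mulVec_s3]
end

section
/- Let n ≥ 3. There exist no w ∈ ℝ^{n×n} and z ∈ ℝ such that for every x ∈ {−1,1}^n, one has ∑_{i,j} w_{ij} x_i x_j − z ≥ 0 whenever the number of +1 entries of x is odd, and ∑_{i,j} w_{ij} x_i x_j − z < 0 whenever the number of +1 entries of x is even. That is, a tensor product perceptron (even with bias) cannot express the parity function on the centred Boolean hypercube {−1,1}^n for n ≥ 3 (and hence also on its normalised version, since all points of {−1,1}^n share the same norm). -/
/-!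
The character `χ x = (-1) ^ #{i | x i = 1}` is, up to a global sign, the full monomial `∏ i, x i`.
It is therefore orthogonal on the cube to every polynomial of total degree less than the dimension:
each monomial misses a variable, and summing over that variable gives zero. A polynomial `p`
computing parity would make `χ x * p x` nonpositive everywhere and negative at the all-`-1` point,
so that its sum over the cube could not vanish. A tensor product perceptron has degree at most two.
-/

section Parity

open MvPolynomial
open scoped Finset

variable {ι R : Type*} [Fintype ι] [CommRing R]

/-- The centred encoding `2b - 1` of a bit `b`, through which `ι → Bool` indexes the cube
`{-1, 1}^ι`; written as a conditional to match the encoding in `stmt9`. -/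
def centredBit (R : Type*) [One R] [Neg R] (b : Bool) : R :=
  if b then 1 else -1

theorem neg_one_pow_card_true_eq_prod (x : ι → Bool) :
    (-1 : R) ^ #{i | x i = true} = ∏ i, -centredBit R (x i) := by
  have neg_centredBit (b : Bool) : -centredBit R b = if b = true then -1 else 1 := by
    cases b <;> simp [centredBit]
  simp only [neg_centredBit, Finset.prod_ite, Finset.prod_const, one_pow, mul_one]

theorem sum_neg_one_pow_card_true_mul_prod_pow_eq_zero [DecidableEq ι] {d : ι → ℕ} {i : ι}
    (hi : d i = 0) :
    ∑ x : ι → Bool, (-1 : R) ^ #{i | x i = true} * ∏ i, centredBit R (x i) ^ d i = 0 := by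
  have sum_missing : ∑ b, -centredBit R b * centredBit R b ^ d i = 0 := by
    simp [hi, centredBit]
  simp only [neg_one_pow_card_true_eq_prod, ← Finset.prod_mul_distrib]
  rw [← Fintype.prod_sum fun i b => -centredBit R b * centredBit R b ^ d i]
  exact Finset.prod_eq_zero (Finset.mem_univ i) sum_missing

theorem sum_neg_one_pow_card_true_mul_eval_eq_zero [DecidableEq ι] {p : MvPolynomial ι R}
    (hp : p.totalDegree < Fintype.card ι) :
    ∑ x : ι → Bool, (-1 : R) ^ #{i | x i = true} * eval (fun i => centredBit R (x i)) p = 0 := by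
  simp only [eval_eq', Finset.mul_sum, mul_left_comm _ (coeff _ p)]
  rw [Finset.sum_comm]
  refine Finset.sum_eq_zero fun d hd => ?_
  obtain ⟨i, hi⟩ := p.exists_degree_lt 1 (by rwa [one_mul]) hd
  rw [← Finset.mul_sum, sum_neg_one_pow_card_true_mul_prod_pow_eq_zero (Nat.lt_one_iff.mp hi),
    mul_zero]

theorem stmt9_general [PartialOrder R] [IsOrderedAddMonoid R] {p : MvPolynomial ι R}
    (hp : p.totalDegree < Fintype.card ι) :
    ¬ ∀ x : ι → Bool,
      (Odd #{i | x i = true} → 0 ≤ eval (fun i => centredBit R (x i)) p) ∧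
      (¬ Odd #{i | x i = true} → eval (fun i => centredBit R (x i)) p < 0) := by
  classical
  intro h
  refine (Finset.sum_neg' (fun x _ => ?_) ⟨fun _ => false, Finset.mem_univ _, ?_⟩).ne
    (sum_neg_one_pow_card_true_mul_eval_eq_zero hp)
  · by_cases hx : Odd #{i | x i = true}
    · simpa only [hx.neg_one_pow, neg_one_mul, neg_nonpos] using (h x).1 hx
    · simpa only [(Nat.not_odd_iff_even.mp hx).neg_one_pow, one_mul] using ((h x).2 hx).le
  · simpa using (h fun _ => false).2 (by simp)

end Parity

section TensorProductPerceptron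

open MvPolynomial

variable {ι R : Type*} [Fintype ι] [CommRing R]

/-- The polynomial computed by the tensor product perceptron with weights `w` and bias `z`. -/
noncomputable def tensorPerceptron (w : ι → ι → R) (z : R) : MvPolynomial ι R :=
  (∑ i, ∑ j, C (w i j) * X i * X j) - C z

theorem eval_tensorPerceptron (w : ι → ι → R) (z : R) (x : ι → R) :
    eval x (tensorPerceptron w z) = (∑ i, ∑ j, w i j * x i * x j) - z := by
  simp [tensorPerceptron]

theorem totalDegree_tensorPerceptron_le (w : ι → ι → R) (z : R) :
    (tensorPerceptron w z).totalDegree ≤ 2 := by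
  have totalDegree_term_le (i j : ι) : (C (w i j) * X i * X j).totalDegree ≤ 2 := by
    rw [mul_assoc, C_mul', X, X, monomial_mul]
    refine (totalDegree_smul_le _ _).trans ((totalDegree_monomial_le _ _).trans ?_)
    simp [Finsupp.sum_add_index']
  refine (totalDegree_sub_C_le _ z).trans ?_
  exact totalDegree_finsetSum_le fun i _ => totalDegree_finsetSum_le fun j _ =>
    totalDegree_term_le i j

end TensorProductPerceptron

/-- For `n ≥ 3`, no tensor product perceptron (even with a bias `z`) expresses
the parity function on the centred Boolean hypercube `{-1,1}^n`: there are no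
`w ∈ ℝ^{n×n}` and `z ∈ ℝ` such that for every `x ∈ {-1,1}^n`,
`∑_{i,j} w_{ij} x_i x_j − z ≥ 0` when the number of `+1` entries of `x` is odd and `< 0`
when it is even. -/
theorem stmt9 (n : ℕ) (hn : 3 ≤ n) :
    ¬ ∃ (w : Fin n → Fin n → ℝ) (z : ℝ),
      ∀ x : Fin n → Bool,
        let xr : Fin n → ℝ := fun i => if x i then 1 else -1
        (Odd (Finset.univ.filter (fun i => x i = true)).card →
          0 ≤ (∑ i, ∑ j, w i j * xr i * xr j) - z) ∧
        (¬ Odd (Finset.univ.filter (fun i => x i = true)).card →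
          (∑ i, ∑ j, w i j * xr i * xr j) - z < 0) := by
  rintro ⟨w, z, h⟩
  refine stmt9_general ((totalDegree_tensorPerceptron_le w z).trans_lt ?_) fun x => ?_
  · rwa [Fintype.card_fin]
  · simpa only [eval_tensorPerceptron, centredBit] using h x
end
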